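/- Under Assumption 1, let (Ỹ_γ^x) be the one-step Poisson randomized midpoint Euler–Maruyama scheme with step size γ ∈ (0, γ₁], γ₁ < 1, and let (X_t^x) be the Langevin diffusion started at x. Then there exists a constant C > 0 independent of t and γ such that for every t ∈ [0, γ]: (i) ‖X_t^x − x‖₂ ≤ C(1 + |x|) t^{1/2}; (ii) ‖Ỹ_γ^x − x‖₂ ≤ C(1 + |x|) γ^{1/2}; (iii) ‖X_γ^x − Ỹ_γ^x‖₂ ≤ C(1 + |x|) γ^{3/2}, where ‖Z‖₂ = (E|Z|²)^{1/2}. -/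

import Mathlib

open MeasureTheory ProbabilityTheory Filter
open scoped ENNReal NNReal RealInnerProductSpace Topology BigOperators

noncomputable section

/-- Euclidean space `ℝ^d`. -/
abbrev Euc (d : ℕ) : Type := EuclideanSpace ℝ (Fin d)

/-- Assumption 1: `U` is `C¹`, `m`-strongly convex and `L`-gradient Lipschitz
(expressed through the two-sided quadratic bound), with `∇U(0) = 0`. -/
def StrongAssumption {d : ℕ} (U : Euc d → ℝ) (m L : ℝ) : Prop :=
  ContDiff ℝ 1 U ∧ 0 < m ∧ m ≤ L ∧
  (∀ x y : Euc d,
    m / 2 * ‖x - y‖ ^ 2 ≤ U y - U x - ⟪gradient U x, y - x⟫ ∧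
    U y - U x - ⟪gradient U x, y - x⟫ ≤ L / 2 * ‖x - y‖ ^ 2) ∧
  gradient U 0 = 0

/-- Assumption 3: `U` is `C³` with third derivative uniformly bounded by `Lt`. -/
def ThirdDerivBounded {d : ℕ} (U : Euc d → ℝ) (Lt : ℝ) : Prop :=
  ContDiff ℝ 3 U ∧ ∀ x : Euc d, ‖iteratedFDeriv ℝ 3 U x‖ ≤ Lt

/-- The standard Gaussian measure on `ℝ^d`. -/
def stdGaussian (d : ℕ) : Measure (Euc d) :=
  (Measure.pi fun _ : Fin d => ProbabilityTheory.gaussianReal 0 1).map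
    ⇑(EuclideanSpace.equiv (Fin d) ℝ).symm

/-- Bernoulli(p) distribution on `ℝ`, giving mass `p` to `1` and `1-p` to `0`. -/
def bern (p : ℝ≥0∞) : Measure ℝ :=
  p • Measure.dirac (1 : ℝ) + (1 - p) • Measure.dirac (0 : ℝ)

/-- The `i`-th PRLMC midpoint. -/
def prlmcMid {d : ℕ} (U : Euc d → ℝ) (η : ℝ) (K : ℕ) (x : Euc d)
    (g : Fin K → Euc d) (i : Fin K) : Euc d :=
  x - (((i : ℝ) * η / (K : ℝ)) • gradient U x) + Real.sqrt (2 * (i : ℝ) * η / (K : ℝ)) • g i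

/-- One step of the PRLMC scheme with step size `η`, Bernoulli variables `h`,
midpoint Gaussians `g` and driving Gaussian `z`. -/
def prlmcStep {d : ℕ} (U : Euc d → ℝ) (η : ℝ) (K : ℕ) (x : Euc d)
    (h : Fin K → ℝ) (g : Fin K → Euc d) (z : Euc d) : Euc d :=
  x - η • gradient U x
    + η • ∑ i : Fin K, h i • (gradient U x - gradient U (prlmcMid U η K x g i))
    + Real.sqrt (2 * η) • z

/-- The law of the randomness used at a single step of the PRLMC scheme:
`K` i.i.d. Bernoulli(1/K) variables, `K` i.i.d. standard Gaussians for the midpoints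
and one standard Gaussian. -/
def prlmcNoise (d K : ℕ) : Measure ((Fin K → ℝ) × (Fin K → Euc d) × Euc d) :=
  (Measure.pi fun _ : Fin K => bern (K : ℝ≥0∞)⁻¹).prod
    ((Measure.pi fun _ : Fin K => stdGaussian d).prod (stdGaussian d))

/-- The one-step transition kernel `Q_η` of the PRLMC chain. -/
def prlmcKernel {d : ℕ} (U : Euc d → ℝ) (η : ℝ) (K : ℕ) (x : Euc d) : Measure (Euc d) :=
  (prlmcNoise d K).map fun r => prlmcStep U η K x r.1 r.2.1 r.2.2

/-- The law of the PRLMC chain after `n` steps, started from the distribution `μ`. -/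
def prlmcIter {d : ℕ} (U : Euc d → ℝ) (η : ℝ) (K : ℕ) (μ : Measure (Euc d)) :
    ℕ → Measure (Euc d)
  | 0 => μ
  | n + 1 => (prlmcIter U η K μ n).bind (prlmcKernel U η K)

/-- The law of the decreasing-step PRLMC chain after `n` steps (the `(k+1)`-th step uses
step size `γ (k+1)`), started from the distribution `μ`. -/
def prlmcIterVar {d : ℕ} (U : Euc d → ℝ) (K : ℕ) (γ : ℕ → ℝ) (μ : Measure (Euc d)) :
    ℕ → Measure (Euc d)
  | 0 => μ
  | n + 1 => (prlmcIterVar U K γ μ n).bind (prlmcKernel U (γ (n + 1)) K)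

/-- Total variation distance. -/
def dTV {d : ℕ} (μ ν : Measure (Euc d)) : ℝ≥0∞ :=
  ⨆ (A : Set (Euc d)) (_ : MeasurableSet A), max (μ A - ν A) (ν A - μ A)

/-- 2-Wasserstein distance. -/
def W2 {d : ℕ} (μ ν : Measure (Euc d)) : ℝ≥0∞ :=
  ⨅ (π : Measure (Euc d × Euc d)) (_ : π.map Prod.fst = μ ∧ π.map Prod.snd = ν),
    (∫⁻ p, ((‖p.1 - p.2‖₊ : ℝ≥0∞)) ^ 2 ∂π) ^ (1 / 2 : ℝ)

/-- The Gibbs measure `π(dx) ∝ exp(-U(x)) dx`. -/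
def gibbs {d : ℕ} (U : Euc d → ℝ) : Measure (Euc d) :=
  (∫⁻ x, ENNReal.ofReal (Real.exp (-U x)) ∂(volume : Measure (Euc d)))⁻¹ •
    (volume : Measure (Euc d)).withDensity fun x => ENNReal.ofReal (Real.exp (-U x))

/-- Membership in the functional class `𝒢`: `C²` functions with bounded gradient and
bounded Hessian. -/
def MemG {d : ℕ} (h : Euc d → ℝ) : Prop :=
  ContDiff ℝ 2 h ∧ (∃ M, ∀ x, ‖gradient h x‖ ≤ M) ∧
    (∃ M, ∀ x, ‖iteratedFDeriv ℝ 2 h x‖ ≤ M)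

/-- The distance `d_𝒢`. -/
def dG {d : ℕ} (μ ν : Measure (Euc d)) : ℝ :=
  sSup { r : ℝ | ∃ h : Euc d → ℝ, MemG h ∧ r = (∫ x, h x ∂μ) - ∫ x, h x ∂ν }

/-- `B` is a standard `d`-dimensional Brownian motion on `(Ω, P)`. -/
def IsBrownianMotion {Ω : Type} [MeasurableSpace Ω] {d : ℕ} (P : Measure Ω)
    (B : ℝ → Ω → Euc d) : Prop :=
  (∀ t, Measurable (B t)) ∧
  (∀ᵐ ω ∂P, B 0 ω = 0 ∧ Continuous fun t => B t ω) ∧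
  (∀ s t : ℝ, 0 ≤ s → s ≤ t →
    Measure.map (fun ω => B t ω - B s ω) P
      = Measure.map (fun z => Real.sqrt (t - s) • z) (stdGaussian d)) ∧
  (∀ τ : ℕ → ℝ, Monotone τ → 0 ≤ τ 0 →
    iIndepFun (fun (i : ℕ) ω => B (τ (i + 1)) ω - B (τ i) ω) P)

/-- `X` is a solution of the Langevin SDE `dX_t = -∇U(X_t) dt + √2 dB_t` started at `x`. -/
def SolvesLangevin {Ω : Type} [MeasurableSpace Ω] {d : ℕ} (U : Euc d → ℝ) (P : Measure Ω)
    (B X : ℝ → Ω → Euc d) (x : Euc d) : Prop :=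
  (∀ t, Measurable (X t)) ∧
  ∀ᵐ ω ∂P, (Continuous fun t => X t ω) ∧ ∀ t, 0 ≤ t →
    X t ω = x - (∫ s in (0:ℝ)..t, gradient U (X s ω)) + Real.sqrt 2 • B t ω

/-- `κ = 2mL/(m+L)`. -/
def kap (m L : ℝ) : ℝ := 2 * m * L / (m + L)

/-- Cumulative times `t_n = γ_1 + ⋯ + γ_n`. -/
def tseq (γ : ℕ → ℝ) (n : ℕ) : ℝ := ∑ k ∈ Finset.Icc 1 n, γ k

/-- The one-step Poisson randomized midpoint scheme `Ỹ_γ^x`, driven by the same Brownian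
motion `B` as the diffusion (so that `√(2γ) ξ = √2 B_γ`), with Bernoulli variables `H` and
midpoint Gaussians `ξ'`. -/
def oneStepPRLMC {Ω : Type} {d : ℕ} (U : Euc d → ℝ) (γ : ℝ) (K : ℕ) (x : Euc d)
    (B : ℝ → Ω → Euc d) (H : Fin K → Ω → ℝ) (ξ' : Fin K → Ω → Euc d) (ω : Ω) : Euc d :=
  x - γ • gradient U x
    + γ • ∑ i : Fin K, H i ω •
        (gradient U x - gradient U (prlmcMid U γ K x (fun j => ξ' j ω) i))
    + Real.sqrt 2 • B γ ω


theorem grad_lip {d : ℕ} {U : Euc d → ℝ} {m L : ℝ} (hU : StrongAssumption U m L) (x y : Euc d) :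
    ‖gradient U y - gradient U x‖ ≤ 2 * L * ‖y - x‖ := by
  obtain ⟨-, hm, hmL, h, -⟩ := hU
  have hL : 0 < L := by linarith
  set v := gradient U y - gradient U x with hv
  set z := y + (1 / (2 * L)) • v with hz
  have h1 := (h x z).2
  have h2 := (h y z).1
  have h3 := (h x y).1
  have e1 : ‖x - z‖ ≤ ‖y - x‖ + 1 / (2 * L) * ‖v‖ := by
    have : x - z = -((y - x) + (1 / (2 * L)) • v) := by rw [hz]; abel
    rw [this, norm_neg]
    refine (norm_add_le _ _).trans ?_
    rw [norm_smul, Real.norm_of_nonneg (by positivity)]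
  have e2 : ⟪v, z - y⟫ = 1 / (2 * L) * ‖v‖ ^ 2 := by
    have : z - y = (1 / (2 * L)) • v := by rw [hz]; abel
    rw [this, real_inner_smul_right, real_inner_self_eq_norm_sq]
  have e3 : ⟪v, z - y⟫ = ⟪gradient U y, z - y⟫ - ⟪gradient U x, z - x⟫ + ⟪gradient U x, y - x⟫ := by
    rw [hv, inner_sub_left]
    have : z - y = (z - x) - (y - x) := by abel
    rw [this]; simp only [inner_sub_left, inner_sub_right]; ring
  have p1 : 0 ≤ m / 2 * ‖y - z‖ ^ 2 := by positivity
  have p2 : 0 ≤ m / 2 * ‖x - y‖ ^ 2 := by positivity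
  have key : 1 / (2 * L) * ‖v‖ ^ 2 ≤ L / 2 * ‖x - z‖ ^ 2 := by linarith
  have e4 : ‖x - z‖ ^ 2 ≤ (‖y - x‖ + 1 / (2 * L) * ‖v‖) ^ 2 := by gcongr
  have e5 : (‖y - x‖ + 1 / (2 * L) * ‖v‖) ^ 2 ≤ 2 * ‖y - x‖ ^ 2 + 2 * (1 / (2 * L) * ‖v‖) ^ 2 := by
    nlinarith [sq_nonneg (‖y - x‖ - 1 / (2 * L) * ‖v‖)]
  have e6 : 1 / (2 * L) * ‖v‖ ^ 2 ≤ L / 2 * (2 * ‖y - x‖ ^ 2 + 2 * (1 / (2 * L) * ‖v‖) ^ 2) :=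
    key.trans (by gcongr; exact e4.trans e5)
  have e7 : ‖v‖ ^ 2 ≤ (2 * L * ‖y - x‖) ^ 2 := by
    have : 4 * L * (1 / (2 * L) * ‖v‖ ^ 2) ≤ 4 * L * (L / 2 * (2 * ‖y - x‖ ^ 2 + 2 * (1 / (2 * L) * ‖v‖) ^ 2)) := by
      gcongr
    have a1 : 4 * L * (1 / (2 * L) * ‖v‖ ^ 2) = 2 * ‖v‖ ^ 2 := by field_simp; ring
    have a2 : 4 * L * (L / 2 * (2 * ‖y - x‖ ^ 2 + 2 * (1 / (2 * L) * ‖v‖) ^ 2)) =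
      (2 * L * ‖y - x‖) ^ 2 + ‖v‖ ^ 2 := by field_simp; ring
    linarith
  exact abs_le_of_sq_le_sq' e7 (by positivity) |>.2

theorem cs_int {g : ℝ → ℝ} (hg : Continuous g) {t : ℝ} (ht : 0 ≤ t) :
    (∫ s in (0:ℝ)..t, g s) ^ 2 ≤ t * ∫ s in (0:ℝ)..t, g s ^ 2 := by
  rcases ht.eq_or_lt with rfl | ht
  · simp
  set c := (∫ s in (0:ℝ)..t, g s) / t with hc
  have h0 : 0 ≤ ∫ s in (0:ℝ)..t, (g s - c) ^ 2 :=
    intervalIntegral.integral_nonneg ht.le fun _ _ => sq_nonneg _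
  have h1 : ∫ s in (0:ℝ)..t, (g s - c) ^ 2 =
      (∫ s in (0:ℝ)..t, g s ^ 2) - 2 * c * (∫ s in (0:ℝ)..t, g s) + t * c ^ 2 := by
    have : ∀ s, (g s - c) ^ 2 = g s ^ 2 - 2 * c * g s + c ^ 2 := fun s => by ring
    simp_rw [this]
    rw [intervalIntegral.integral_add, intervalIntegral.integral_sub,
      intervalIntegral.integral_const_mul]
    · simp
    all_goals exact Continuous.intervalIntegrable (by fun_prop) _ _
  have h2 : ∫ s in (0:ℝ)..t, g s = c * t := by rw [hc]; field_simp
  rw [h1, h2] at h0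
  rw [h2]
  nlinarith

theorem gron {f a : ℝ → ℝ} (hf : Continuous f) (ha : Continuous a) {G : ℝ} (hG : 0 ≤ G)
    (ha0 : ∀ s, 0 ≤ s → 0 ≤ a s)
    (h : ∀ t, 0 ≤ t → f t ≤ a t + G * ∫ s in (0:ℝ)..t, f s) {t : ℝ} (ht : 0 ≤ t) (ht1 : t ≤ 1) :
    ∫ s in (0:ℝ)..t, f s ≤ Real.exp G * ∫ s in (0:ℝ)..t, a s := by
  have hd : ∀ u : ℝ, HasDerivAt (fun u => (∫ s in (0:ℝ)..u, f s) * Real.exp (-G * u) -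
      ∫ s in (0:ℝ)..u, a s)
      (f u * Real.exp (-G * u) + (∫ s in (0:ℝ)..u, f s) * (Real.exp (-G * u) * (-G * 1)) - a u) u := by
    intro u
    exact ((hf.integral_hasStrictDerivAt 0 u).hasDerivAt.mul
      (((hasDerivAt_id u).const_mul (-G)).exp)).sub (ha.integral_hasStrictDerivAt 0 u).hasDerivAt
  have hanti : AntitoneOn (fun u => (∫ s in (0:ℝ)..u, f s) * Real.exp (-G * u) -
      ∫ s in (0:ℝ)..u, a s) (Set.Ici 0) := by
    apply antitoneOn_of_deriv_nonpos (convex_Ici 0)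
    · exact fun u _ => (hd u).continuousAt.continuousWithinAt
    · exact fun u _ => (hd u).differentiableAt.differentiableWithinAt
    · intro u hu
      rw [interior_Ici] at hu
      have hu : 0 ≤ u := le_of_lt hu
      rw [(hd u).deriv]
      have e := Real.exp_pos (-G * u)
      have e1 : Real.exp (-G * u) ≤ 1 := Real.exp_le_one_iff.2 (by nlinarith)
      nlinarith [mul_le_mul_of_nonneg_left (h u hu) e.le, ha0 u hu,
        mul_nonneg (ha0 u hu) (sub_nonneg.2 e1)]
  have := hanti (Set.mem_Ici.2 le_rfl) (Set.mem_Ici.2 ht) ht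
  simp only [intervalIntegral.integral_same, zero_mul, sub_zero, sub_nonpos] at this
  have hA : 0 ≤ ∫ s in (0:ℝ)..t, a s :=
    intervalIntegral.integral_nonneg ht fun u hu => ha0 u hu.1
  calc ∫ s in (0:ℝ)..t, f s = Real.exp (G * t) * ((∫ s in (0:ℝ)..t, f s) * Real.exp (-G * t)) := by
        rw [mul_left_comm, ← Real.exp_add]; simp
    _ ≤ Real.exp (G * t) * ∫ s in (0:ℝ)..t, a s := by gcongr
    _ ≤ _ := by gcongr; nlinarith

/-- Pathwise estimates. -/
theorem path_est {d : ℕ} {F : Euc d → Euc d} {G : ℝ} (hG : 0 ≤ G)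
    (hF : ∀ x y, ‖F y - F x‖ ≤ G * ‖y - x‖) (hF0 : F 0 = 0) {X b : ℝ → Euc d} {x : Euc d}
    (hX : Continuous X) (hb : Continuous b)
    (hs : ∀ t, 0 ≤ t → X t = x - (∫ s in (0:ℝ)..t, F (X s)) + Real.sqrt 2 • b t)
    {t : ℝ} (ht : 0 ≤ t) (ht1 : t ≤ 1) :
    (∫ s in (0:ℝ)..t, ‖X s - x‖) ^ 2 ≤
      Real.exp G ^ 2 * (2 * G ^ 2 * ‖x‖ ^ 2 * t ^ 4 + 4 * t * ∫ s in (0:ℝ)..t, ‖b s‖ ^ 2) ∧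
    ‖X t - x‖ ≤ G * ‖x‖ * t + Real.sqrt 2 * ‖b t‖ + G * ∫ s in (0:ℝ)..t, ‖X s - x‖ ∧
    ‖X t - x + t • F x - Real.sqrt 2 • b t‖ ≤ G * ∫ s in (0:ℝ)..t, ‖X s - x‖ := by
  have hFc : Continuous F := by
    have : LipschitzWith G.toNNReal F := LipschitzWith.of_dist_le_mul fun x y => by
      rw [dist_eq_norm, dist_eq_norm, Real.coe_toNNReal _ hG]; exact hF y x
    exact this.continuous
  have key : ∀ t, 0 ≤ t → ‖X t - x + t • F x - Real.sqrt 2 • b t‖ ≤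
      G * ∫ s in (0:ℝ)..t, ‖X s - x‖ := by
    intro t ht
    have e : X t - x + t • F x - Real.sqrt 2 • b t = - ∫ s in (0:ℝ)..t, (F (X s) - F x) := by
      rw [intervalIntegral.integral_sub (Continuous.intervalIntegrable (by fun_prop) _ _)
        (Continuous.intervalIntegrable (by fun_prop) _ _), intervalIntegral.integral_const, hs t ht]
      simp only [sub_zero]; abel
    rw [e, norm_neg, ← intervalIntegral.integral_const_mul]
    apply intervalIntegral.norm_integral_le_of_norm_le ht
    · exact Eventually.of_forall fun s _ => hF _ _
    · exact Continuous.intervalIntegrable (by fun_prop) _ _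
  have hFx : ‖F x‖ ≤ G * ‖x‖ := by simpa [hF0] using hF 0 x
  have key2 : ∀ t, 0 ≤ t → ‖X t - x‖ ≤ (G * ‖x‖ * t + Real.sqrt 2 * ‖b t‖) +
      G * ∫ s in (0:ℝ)..t, ‖X s - x‖ := by
    intro t ht
    have e : X t - x = (X t - x + t • F x - Real.sqrt 2 • b t) + (Real.sqrt 2 • b t - t • F x) := by
      abel
    have h1 : ‖Real.sqrt 2 • b t - t • F x‖ ≤ G * ‖x‖ * t + Real.sqrt 2 * ‖b t‖ := by
      refine (norm_sub_le _ _).trans ?_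
      rw [norm_smul, norm_smul, Real.norm_of_nonneg ht, Real.norm_of_nonneg (Real.sqrt_nonneg _)]
      nlinarith
    have h2 := norm_add_le (X t - x + t • F x - Real.sqrt 2 • b t) (Real.sqrt 2 • b t - t • F x)
    rw [← e] at h2
    linarith [key t ht]
  refine ⟨?_, key2 t ht, key t ht⟩
  have g := gron (f := fun s => ‖X s - x‖) (a := fun s => G * ‖x‖ * s + Real.sqrt 2 * ‖b s‖)
    (by fun_prop) (by fun_prop) hG (fun s hs => by positivity) key2 ht ht1
  have hint : ∫ s in (0:ℝ)..t, (G * ‖x‖ * s + Real.sqrt 2 * ‖b s‖) =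
      G * ‖x‖ * (t ^ 2 / 2) + Real.sqrt 2 * ∫ s in (0:ℝ)..t, ‖b s‖ := by
    rw [intervalIntegral.integral_add (Continuous.intervalIntegrable (by fun_prop) _ _)
        (Continuous.intervalIntegrable (by fun_prop) _ _), intervalIntegral.integral_const_mul,
        intervalIntegral.integral_const_mul, integral_id]
    simp
  rw [hint] at g
  have hcs := cs_int (g := fun s => ‖b s‖) (by fun_prop) ht
  have h0 : 0 ≤ ∫ s in (0:ℝ)..t, ‖X s - x‖ :=
    intervalIntegral.integral_nonneg ht fun _ _ => norm_nonneg _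
  calc _ ≤ (Real.exp G * (G * ‖x‖ * (t ^ 2 / 2) + Real.sqrt 2 * ∫ s in (0:ℝ)..t, ‖b s‖)) ^ 2 := by
        gcongr
    _ = Real.exp G ^ 2 * (G * ‖x‖ * (t ^ 2 / 2) + Real.sqrt 2 * ∫ s in (0:ℝ)..t, ‖b s‖) ^ 2 := by ring
    _ ≤ _ := by
        gcongr
        have s2 : Real.sqrt 2 ^ 2 = 2 := Real.sq_sqrt (by norm_num)
        have q := sq_nonneg (G * ‖x‖ * (t ^ 2 / 2) - Real.sqrt 2 * ∫ s in (0:ℝ)..t, ‖b s‖)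
        have q2 : (Real.sqrt 2 * ∫ s in (0:ℝ)..t, ‖b s‖) ^ 2 ≤ 2 * (t * ∫ s in (0:ℝ)..t, ‖b s‖ ^ 2) := by
          rw [mul_pow, s2]; gcongr
        have q3 : 0 ≤ (G * ‖x‖ * t ^ 2) ^ 2 := sq_nonneg _
        nlinarith

/-- Second moment of the standard Gaussian. -/
def gaussM (d : ℕ) : ℝ≥0∞ := ∫⁻ z, ‖z‖ₑ ^ 2 ∂(_root_.stdGaussian d)

instance (d : ℕ) : IsProbabilityMeasure (_root_.stdGaussian d) := by
  unfold _root_.stdGaussian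
  exact Measure.isProbabilityMeasure_map (by fun_prop)

theorem gaussM_lt (d : ℕ) : gaussM d < ∞ := by
  unfold gaussM _root_.stdGaussian
  rw [lintegral_map (by fun_prop) (by fun_prop)]
  have h : ∀ a : Fin d → ℝ, ‖(EuclideanSpace.equiv (Fin d) ℝ).symm a‖ₑ ^ 2 = ∑ i, ‖a i‖ₑ ^ 2 := by
    intro a
    rw [← ofReal_norm, ← ENNReal.ofReal_pow (norm_nonneg _), EuclideanSpace.norm_sq_eq,
      ENNReal.ofReal_sum_of_nonneg (fun _ _ => sq_nonneg _)]
    refine Finset.sum_congr rfl fun i _ => ?_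
    rw [ENNReal.ofReal_pow (norm_nonneg _), ofReal_norm]; rfl
  simp_rw [h]
  rw [lintegral_finsetSum _ (fun i _ => by fun_prop)]
  refine ENNReal.sum_lt_top.2 fun i _ => ?_
  have e : ∫⁻ a : Fin d → ℝ, ‖a i‖ₑ ^ 2 ∂(Measure.pi fun _ : Fin d => gaussianReal 0 1) =
      ∫⁻ y, ‖y‖ₑ ^ 2 ∂(gaussianReal 0 1) := by
    exact (measurePreserving_eval (fun _ : Fin d => gaussianReal 0 1) i).lintegral_comp
      (f := fun y : ℝ => ‖y‖ₑ ^ 2) (by fun_prop)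
  rw [e]
  have := memLp_id_gaussianReal (μ := 0) (v := 1) 2
  have h2 := (lintegral_rpow_enorm_lt_top_of_eLpNorm_lt_top (p := 2) (by norm_num) (by norm_num) this.2)
  simpa using h2

theorem bm_moment {Ω : Type} [MeasurableSpace Ω] {d : ℕ} {P : Measure Ω} {B : ℝ → Ω → Euc d}
    (hB : IsBrownianMotion P B) {t : ℝ} (ht : 0 ≤ t) :
    ∫⁻ ω, ‖B t ω‖ₑ ^ 2 ∂P = ENNReal.ofReal t * gaussM d := by
  obtain ⟨hm, hc, hl, -⟩ := hB
  have h1 : ∫⁻ ω, ‖B t ω‖ₑ ^ 2 ∂P = ∫⁻ ω, ‖B t ω - B 0 ω‖ₑ ^ 2 ∂P := by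
    apply lintegral_congr_ae
    filter_upwards [hc] with ω hω
    rw [hω.1, sub_zero]
  have hm0 := hm 0
  have hmt := hm t
  rw [h1, ← lintegral_map (f := fun z : Euc d => ‖z‖ₑ ^ 2) (g := fun ω => B t ω - B 0 ω)
    (by fun_prop) (by fun_prop), hl 0 t le_rfl ht, lintegral_map (by fun_prop) (by fun_prop), gaussM,
    ← lintegral_const_mul _ (by fun_prop)]
  refine lintegral_congr fun z => ?_
  rw [enorm_smul, mul_pow, Real.enorm_of_nonneg (Real.sqrt_nonneg _),
    ← ENNReal.ofReal_pow (Real.sqrt_nonneg _), Real.sq_sqrt (by linarith), sub_zero]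

theorem bm_int {Ω : Type} [MeasurableSpace Ω] {d : ℕ} {P : Measure Ω} [IsProbabilityMeasure P]
    {B : ℝ → Ω → Euc d}
    (hB : IsBrownianMotion P B) {t : ℝ} (ht : 0 ≤ t) :
    AEMeasurable (fun ω => ENNReal.ofReal (∫ s in (0:ℝ)..t, ‖B s ω‖ ^ 2)) P ∧
    ∫⁻ ω, ENNReal.ofReal (∫ s in (0:ℝ)..t, ‖B s ω‖ ^ 2) ∂P ≤ ENNReal.ofReal (t ^ 2) * gaussM d := by
  classical
  obtain ⟨hm, hc, -, -⟩ := id hB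
  obtain ⟨N, hN, hNm, hNt⟩ := exists_measurable_superset_of_null (ae_iff.1 hc)
  set B' : ℝ → Ω → Euc d := fun s ω => if ω ∈ N then 0 else B s ω with hB'
  have hae : ∀ᵐ ω ∂P, ω ∉ N := measure_eq_zero_iff_ae_notMem.1 hNt
  have hB'm : ∀ s, Measurable (B' s) := fun s => Measurable.ite hNm measurable_const (hm s)
  have hB'c : ∀ ω, Continuous fun s => B' s ω := by
    intro ω
    by_cases h : ω ∈ N
    · simp only [hB', h, if_true]; exact continuous_const
    · simp only [hB', h, if_false]
      by_contra hcon
      exact h (hN fun hh => hcon hh.2)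
  have hj : Measurable (Function.uncurry B') :=
    measurable_uncurry_of_continuous_of_measurable hB'c hB'm
  have hj2 : Measurable (fun p : Ω × ℝ => ‖B' p.2 p.1‖ₑ ^ 2) := by
    have : Measurable (fun p : Ω × ℝ => B' p.2 p.1) := hj.comp measurable_swap
    fun_prop
  have e : (fun ω => ENNReal.ofReal (∫ s in (0:ℝ)..t, ‖B s ω‖ ^ 2)) =ᵐ[P]
      fun ω => ∫⁻ s in Set.Ioc 0 t, ‖B' s ω‖ₑ ^ 2 := by
    filter_upwards [hae] with ω hω
    have hh : ∀ s, B s ω = B' s ω := fun s => by simp [hB', hω]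
    simp_rw [hh]
    have hcc := hB'c ω
    rw [intervalIntegral.integral_of_le ht, ofReal_integral_eq_lintegral_ofReal]
    · refine lintegral_congr fun s => ?_
      rw [ENNReal.ofReal_pow (norm_nonneg _), ofReal_norm]
    · exact ((Continuous.integrableOn_Icc (by fun_prop)).mono_set Set.Ioc_subset_Icc_self)
    · exact Eventually.of_forall fun s => sq_nonneg _
  refine ⟨AEMeasurable.congr (Measurable.aemeasurable hj2.lintegral_prod_right') e.symm, ?_⟩
  rw [lintegral_congr_ae e, lintegral_lintegral_swap hj2.aemeasurable]
  calc ∫⁻ s in Set.Ioc 0 t, ∫⁻ ω, ‖B' s ω‖ₑ ^ 2 ∂P ≤ ∫⁻ s in Set.Ioc 0 t, ENNReal.ofReal t * gaussM d := by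
        apply setLIntegral_mono measurable_const
        intro s hs
        have : ∫⁻ ω, ‖B' s ω‖ₑ ^ 2 ∂P = ∫⁻ ω, ‖B s ω‖ₑ ^ 2 ∂P := by
          apply lintegral_congr_ae
          filter_upwards [hae] with ω hω
          simp [hB', hω]
        rw [this, bm_moment hB hs.1.le]
        gcongr
        exact hs.2
    _ = _ := by
        rw [setLIntegral_const, Real.volume_Ioc, sub_zero, sq, ENNReal.ofReal_mul ht]; ring

theorem expect_bound {Ω : Type} [MeasurableSpace Ω] {P : Measure Ω} [IsProbabilityMeasure P]
    {F u v : Ω → ℝ} {c0 c1 c2 a b : ℝ} (h0 : 0 ≤ c0) (h1 : 0 ≤ c1) (h2 : 0 ≤ c2)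
    (ha : 0 ≤ a) (hb : 0 ≤ b)
    (h : ∀ᵐ ω ∂P, F ω ≤ c0 + c1 * u ω + c2 * v ω)
    (hv : AEMeasurable (fun ω => ENNReal.ofReal (v ω)) P)
    (hua : ∫⁻ ω, ENNReal.ofReal (u ω) ∂P ≤ ENNReal.ofReal a)
    (hvb : ∫⁻ ω, ENNReal.ofReal (v ω) ∂P ≤ ENNReal.ofReal b) :
    ∫⁻ ω, ENNReal.ofReal (F ω) ∂P ≤ ENNReal.ofReal (c0 + c1 * a + c2 * b) := by
  calc ∫⁻ ω, ENNReal.ofReal (F ω) ∂P ≤ ∫⁻ ω, ((ENNReal.ofReal c0 +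
        ENNReal.ofReal c1 * ENNReal.ofReal (u ω)) + ENNReal.ofReal c2 * ENNReal.ofReal (v ω)) ∂P := by
        apply lintegral_mono_ae
        filter_upwards [h] with ω hω
        refine (ENNReal.ofReal_le_ofReal hω).trans ?_
        refine ENNReal.ofReal_add_le.trans ?_
        rw [← ENNReal.ofReal_mul h1, ← ENNReal.ofReal_mul h2]
        gcongr
        exact ENNReal.ofReal_add_le
    _ = ENNReal.ofReal c0 + ENNReal.ofReal c1 * ∫⁻ ω, ENNReal.ofReal (u ω) ∂P +
        ENNReal.ofReal c2 * ∫⁻ ω, ENNReal.ofReal (v ω) ∂P := by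
        rw [lintegral_add_right' _ (hv.const_mul _), lintegral_add_left measurable_const,
          lintegral_const_mul' _ _ ENNReal.ofReal_ne_top, lintegral_const_mul' _ _ ENNReal.ofReal_ne_top]
        simp
    _ ≤ ENNReal.ofReal c0 + ENNReal.ofReal c1 * ENNReal.ofReal a +
        ENNReal.ofReal c2 * ENNReal.ofReal b := by gcongr
    _ = _ := by
        rw [← ENNReal.ofReal_mul h1, ← ENNReal.ofReal_mul h2, ← ENNReal.ofReal_add h0 (by positivity),
          ← ENNReal.ofReal_add (by positivity) (by positivity)]

theorem bern_prob {K : ℕ} (hK : 1 ≤ K) : IsProbabilityMeasure (bern (K : ℝ≥0∞)⁻¹) := by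
  constructor
  have : (K : ℝ≥0∞)⁻¹ ≤ 1 := by
    rw [ENNReal.inv_le_one]; exact_mod_cast hK
  simp [bern, add_tsub_cancel_of_le this]

theorem bern_ae (p : ℝ≥0∞) : ∀ᵐ y ∂(bern p), |y| ≤ 1 := by
  have hs : MeasurableSet {y : ℝ | ¬ |y| ≤ 1} := by
    exact (measurableSet_le (f := fun y : ℝ => |y|) (g := fun _ => (1:ℝ)) (by fun_prop)
      measurable_const).compl
  rw [ae_iff]
  simp [bern]

theorem noise_facts {d K : ℕ} (hK : 1 ≤ K) {Ω : Type} [MeasurableSpace Ω] {P : Measure Ω}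
    {H : Fin K → Ω → ℝ} {ξ' : Fin K → Ω → Euc d}
    (hl : Measure.map (fun ω => ((fun i => H i ω), fun i => ξ' i ω)) P =
            (Measure.pi fun _ : Fin K => bern (K : ℝ≥0∞)⁻¹).prod
              (Measure.pi fun _ : Fin K => _root_.stdGaussian d)) :
    (∀ᵐ ω ∂P, ∀ i, |H i ω| ≤ 1) ∧ (∀ i, AEMeasurable (ξ' i) P) ∧
      ∀ i, ∫⁻ ω, ‖ξ' i ω‖ₑ ^ 2 ∂P = gaussM d := by
  have := bern_prob hK
  have hm : AEMeasurable (fun ω => ((fun i => H i ω), fun i => ξ' i ω)) P := by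
    apply AEMeasurable.of_map_ne_zero
    rw [hl]
    exact IsProbabilityMeasure.ne_zero _
  have hfst : Measure.map (fun ω => (fun i => H i ω)) P =
      Measure.pi fun _ : Fin K => bern (K : ℝ≥0∞)⁻¹ := by
    have := congrArg (Measure.map Prod.fst) hl
    rw [AEMeasurable.map_map_of_aemeasurable (by fun_prop) hm, Measure.map_fst_prod] at this
    simpa [Function.comp_def] using this
  have hsnd : Measure.map (fun ω => (fun i => ξ' i ω)) P =
      Measure.pi fun _ : Fin K => _root_.stdGaussian d := by
    have := congrArg (Measure.map Prod.snd) hl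
    rw [AEMeasurable.map_map_of_aemeasurable (by fun_prop) hm, Measure.map_snd_prod] at this
    simpa [Function.comp_def] using this
  have hm1 : AEMeasurable (fun ω => (fun i => H i ω)) P := measurable_fst.comp_aemeasurable hm
  have hm2 : AEMeasurable (fun ω => (fun i => ξ' i ω)) P := measurable_snd.comp_aemeasurable hm
  have hξ : ∀ i, AEMeasurable (ξ' i) P := fun i => (measurable_pi_apply i).comp_aemeasurable hm2
  refine ⟨?_, hξ, fun i => ?_⟩
  · rw [ae_all_iff]
    intro i
    have h1 : ∀ᵐ y ∂(Measure.map (fun ω => (fun i => H i ω)) P), |y i| ≤ 1 := by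
      rw [hfst]
      exact (measurePreserving_eval (fun _ : Fin K => bern (K : ℝ≥0∞)⁻¹) i).quasiMeasurePreserving.ae
        (bern_ae _)
    exact ae_of_ae_map hm1 h1
  · rw [← lintegral_map' (f := fun y : Fin K → Euc d => ‖y i‖ₑ ^ 2)
      (Measurable.aemeasurable (by fun_prop)) hm2, hsnd]
    exact (measurePreserving_eval (fun _ : Fin K => _root_.stdGaussian d) i).lintegral_comp
      (f := fun y : Euc d => ‖y‖ₑ ^ 2) (by fun_prop)

theorem mid_est {d K : ℕ} (hK : 1 ≤ K) {U : Euc d → ℝ} {G : ℝ} (hG : 0 ≤ G) {x : Euc d}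
    (hx : ‖gradient U x‖ ≤ G * ‖x‖) {γ : ℝ} (hγ : 0 ≤ γ) (g : Fin K → Euc d) (i : Fin K) :
    ‖prlmcMid U γ K x g i - x‖ ^ 2 ≤ 2 * γ ^ 2 * G ^ 2 * ‖x‖ ^ 2 + 4 * γ * ‖g i‖ ^ 2 := by
  have hK' : (0:ℝ) < K := by exact_mod_cast hK
  have hi : (i : ℝ) ≤ K := by exact_mod_cast i.2.le
  have e : prlmcMid U γ K x g i - x = Real.sqrt (2 * (i : ℝ) * γ / (K : ℝ)) • g i -
      (((i : ℝ) * γ / (K : ℝ)) • gradient U x) := by unfold prlmcMid; abel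
  have h1 : (i : ℝ) * γ / K ≤ γ := by
    rw [div_le_iff₀ hK']; nlinarith
  have h1' : 0 ≤ (i : ℝ) * γ / K := by positivity
  have h2 : ‖(((i : ℝ) * γ / (K : ℝ)) • gradient U x)‖ ≤ γ * (G * ‖x‖) := by
    rw [norm_smul, Real.norm_of_nonneg h1']
    gcongr
  have h3 : ‖Real.sqrt (2 * (i : ℝ) * γ / (K : ℝ)) • g i‖ ^ 2 ≤ 2 * γ * ‖g i‖ ^ 2 := by
    rw [norm_smul, mul_pow, Real.norm_of_nonneg (Real.sqrt_nonneg _), Real.sq_sqrt (by positivity)]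
    gcongr
    calc 2 * (i : ℝ) * γ / K = 2 * ((i : ℝ) * γ / K) := by ring
      _ ≤ _ := by gcongr
  have h4 := norm_sub_le (Real.sqrt (2 * (i : ℝ) * γ / (K : ℝ)) • g i)
    (((i : ℝ) * γ / (K : ℝ)) • gradient U x)
  rw [e]
  set p := ‖Real.sqrt (2 * (i : ℝ) * γ / (K : ℝ)) • g i‖
  set q := ‖(((i : ℝ) * γ / (K : ℝ)) • gradient U x)‖
  have hq : q ^ 2 ≤ (γ * (G * ‖x‖)) ^ 2 := by gcongr
  calc _ ≤ (p + q) ^ 2 := by gcongr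
    _ ≤ 2 * p ^ 2 + 2 * q ^ 2 := by nlinarith [sq_nonneg (p - q)]
    _ ≤ _ := by nlinarith

theorem enorm_sq_eq {d : ℕ} (v : Euc d) : (‖v‖₊ : ℝ≥0∞) ^ 2 = ENNReal.ofReal (‖v‖ ^ 2) := by
  rw [ENNReal.ofReal_pow (norm_nonneg _), ofReal_norm]; rfl

set_option maxHeartbeats 1000000

/-- Under Assumption 1, there is `C > 0` (independent of `t`, `γ`) such
that the Langevin diffusion and the one-step Poisson randomized midpoint scheme satisfy, for
`t ∈ [0, γ]`:  `‖X_t^x − x‖₂ ≤ C(1+|x|) t^{1/2}`, `‖Ỹ_γ^x − x‖₂ ≤ C(1+|x|) γ^{1/2}` and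
`‖X_γ^x − Ỹ_γ^x‖₂ ≤ C(1+|x|) γ^{3/2}` (stated equivalently for the squared `L²`-norms). -/
theorem stmt13 (d K : ℕ) (hK : 1 ≤ K) (m L : ℝ) (γ₁ : ℝ) (hγ₁ : γ₁ ∈ Set.Ioo (0 : ℝ) 1)
    (U : Euc d → ℝ) (hU : StrongAssumption U m L) :
    ∃ C > (0 : ℝ), ∀ γ : ℝ, 0 < γ → γ ≤ γ₁ →
      ∀ (x : Euc d) (Ω : Type) (_ : MeasurableSpace Ω) (P : Measure Ω),
        IsProbabilityMeasure P →
        ∀ (B X : ℝ → Ω → Euc d) (H : Fin K → Ω → ℝ) (ξ' : Fin K → Ω → Euc d),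
          IsBrownianMotion P B → SolvesLangevin U P B X x →
          Measure.map (fun ω => ((fun i => H i ω), fun i => ξ' i ω)) P =
            (Measure.pi fun _ : Fin K => bern (K : ℝ≥0∞)⁻¹).prod
              (Measure.pi fun _ : Fin K => stdGaussian d) →
          IndepFun (fun ω => ((fun i => H i ω), fun i => ξ' i ω))
            (fun ω => fun s : ℝ => B s ω) P →
          ∀ t : ℝ, t ∈ Set.Icc 0 γ →
            (∫⁻ ω, (‖X t ω - x‖₊ : ℝ≥0∞) ^ 2 ∂P ≤
                ENNReal.ofReal (C * (1 + ‖x‖) ^ 2 * t)) ∧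
            (∫⁻ ω, (‖oneStepPRLMC U γ K x B H ξ' ω - x‖₊ : ℝ≥0∞) ^ 2 ∂P ≤
                ENNReal.ofReal (C * (1 + ‖x‖) ^ 2 * γ)) ∧
            (∫⁻ ω, (‖X γ ω - oneStepPRLMC U γ K x B H ξ' ω‖₊ : ℝ≥0∞) ^ 2 ∂P ≤
                ENNReal.ofReal (C * (1 + ‖x‖) ^ 2 * γ ^ 3)) := by
  have hU' := hU
  obtain ⟨-, hm, hmL, -, hg0⟩ := hU'
  set G := 2 * L with hGdef
  have hG : 0 ≤ G := by linarith
  have hlip : ∀ x y, ‖gradient U y - gradient U x‖ ≤ G * ‖y - x‖ := fun x y => grad_lip hU x y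
  set E := Real.exp G ^ 2 with hE
  have hE0 : 0 ≤ E := by positivity
  set D := (gaussM d).toReal with hD
  have hD0 : 0 ≤ D := ENNReal.toReal_nonneg
  have hDe : gaussM d = ENNReal.ofReal D := (ENNReal.ofReal_toReal (gaussM_lt d).ne).symm
  set C1 := 3 * G ^ 2 + 6 * D + 6 * G ^ 4 * E + 12 * G ^ 2 * E * D with hC1
  set C3 := 4 * G ^ 4 * E + 4 * G ^ 4 * K ^ 2 + 8 * G ^ 2 * E * D + 8 * G ^ 2 * K ^ 2 * D with hC3
  have hC1p : 0 ≤ C1 := by positivity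
  have hC3p : 0 ≤ C3 := by positivity
  refine ⟨2 * C1 + 2 * C3 + 1, by positivity, ?_⟩
  intro γ hγ hγγ x Ω _ P hP B X H ξ' hB hX hlaw _ t ht
  have hγ1 : γ ≤ 1 := hγγ.trans hγ₁.2.le
  have hFx : ‖gradient U x‖ ≤ G * ‖x‖ := by simpa [hg0] using hlip 0 x
  obtain ⟨hH, hξm, hξ⟩ := noise_facts hK hlaw
  have hmom : ∀ s, 0 ≤ s → ∫⁻ ω, ENNReal.ofReal (‖B s ω‖ ^ 2) ∂P ≤ ENNReal.ofReal (s * D) := by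
    intro s hs
    have := bm_moment hB hs
    rw [hDe, ← ENNReal.ofReal_mul hs] at this
    rw [← this]
    exact lintegral_mono fun ω => by rw [← enorm_sq_eq]; rfl
  have hQ : ∀ s, 0 ≤ s → AEMeasurable (fun ω => ENNReal.ofReal (∫ r in (0:ℝ)..s, ‖B r ω‖ ^ 2)) P ∧
      ∫⁻ ω, ENNReal.ofReal (∫ r in (0:ℝ)..s, ‖B r ω‖ ^ 2) ∂P ≤ ENNReal.ofReal (s ^ 2 * D) := by
    intro s hs
    have := bm_int hB hs
    rwa [hDe, ← ENNReal.ofReal_mul (by positivity)] at this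
  have hx1 : ‖x‖ ^ 2 ≤ (1 + ‖x‖) ^ 2 := by
    gcongr; linarith
  have hx2 : 1 ≤ (1 + ‖x‖) ^ 2 := by nlinarith [norm_nonneg x]
  set W := (1 + ‖x‖) ^ 2 with hW
  -- part (i)
  have part1 : ∀ s, 0 ≤ s → s ≤ 1 → ∫⁻ ω, ENNReal.ofReal (‖X s ω - x‖ ^ 2) ∂P ≤
      ENNReal.ofReal (C1 * W * s) := by
    intro s hs hs1
    have hbd : ∀ᵐ ω ∂P, ‖X s ω - x‖ ^ 2 ≤ (3 * G ^ 2 * ‖x‖ ^ 2 * s ^ 2 + 6 * G ^ 4 * E * ‖x‖ ^ 2 * s ^ 4)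
        + 6 * ‖B s ω‖ ^ 2 + (12 * G ^ 2 * E * s) * ∫ r in (0:ℝ)..s, ‖B r ω‖ ^ 2 := by
      filter_upwards [hB.2.1, hX.2] with ω hb hx
      obtain ⟨p1, p2, -⟩ := path_est hG hlip hg0 hx.1 hb.2 hx.2 hs hs1
      set I := ∫ r in (0:ℝ)..s, ‖X r ω - x‖
      set Q := ∫ r in (0:ℝ)..s, ‖B r ω‖ ^ 2
      have s2 : Real.sqrt 2 ^ 2 = 2 := Real.sq_sqrt (by norm_num)
      calc ‖X s ω - x‖ ^ 2 ≤ (G * ‖x‖ * s + Real.sqrt 2 * ‖B s ω‖ + G * I) ^ 2 := by gcongr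
        _ ≤ 3 * ((G * ‖x‖ * s) ^ 2 + (Real.sqrt 2 * ‖B s ω‖) ^ 2 + (G * I) ^ 2) := by
          nlinarith [sq_nonneg (G * ‖x‖ * s - Real.sqrt 2 * ‖B s ω‖),
            sq_nonneg (G * ‖x‖ * s - G * I), sq_nonneg (Real.sqrt 2 * ‖B s ω‖ - G * I)]
        _ = 3 * (G ^ 2 * ‖x‖ ^ 2 * s ^ 2 + 2 * ‖B s ω‖ ^ 2 + G ^ 2 * I ^ 2) := by
          rw [mul_pow (Real.sqrt 2), s2]; ring
        _ ≤ 3 * (G ^ 2 * ‖x‖ ^ 2 * s ^ 2 + 2 * ‖B s ω‖ ^ 2 + G ^ 2 *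
            (E * (2 * G ^ 2 * ‖x‖ ^ 2 * s ^ 4 + 4 * s * Q))) := by gcongr
        _ = _ := by ring
    refine (expect_bound (by positivity) (by norm_num) (by positivity) (a := s * D) (b := s ^ 2 * D)
      (by positivity) (by positivity) hbd (hQ s hs).1 (hmom s hs) (hQ s hs).2).trans ?_
    apply ENNReal.ofReal_le_ofReal
    have a1 : 3 * G ^ 2 * ‖x‖ ^ 2 * s ^ 2 ≤ 3 * G ^ 2 * W * s := by
      gcongr; nlinarith
    have a2 : 6 * G ^ 4 * E * ‖x‖ ^ 2 * s ^ 4 ≤ 6 * G ^ 4 * E * W * s := by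
      gcongr; exact pow_le_of_le_one hs hs1 (by norm_num)
    have a3 : 6 * (s * D) ≤ 6 * D * W * s := by
      nlinarith [mul_nonneg (mul_nonneg hs hD0) (sub_nonneg.2 hx2)]
    have a4 : (12 * G ^ 2 * E * s) * (s ^ 2 * D) ≤ 12 * G ^ 2 * E * D * W * s := by
      calc (12 * G ^ 2 * E * s) * (s ^ 2 * D) = 12 * G ^ 2 * E * D * 1 * s ^ 3 := by ring
        _ ≤ _ := by gcongr; exact pow_le_of_le_one hs hs1 (by norm_num)
    calc _ ≤ 3 * G ^ 2 * W * s + 6 * G ^ 4 * E * W * s + 6 * D * W * s + 12 * G ^ 2 * E * D * W * s := by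
          linarith
      _ = _ := by rw [hC1]; ring
  -- part (iii)
  have part3 : ∫⁻ ω, ENNReal.ofReal (‖X γ ω - oneStepPRLMC U γ K x B H ξ' ω‖ ^ 2) ∂P ≤
      ENNReal.ofReal (C3 * W * γ ^ 3) := by
    have hbd : ∀ᵐ ω ∂P, ‖X γ ω - oneStepPRLMC U γ K x B H ξ' ω‖ ^ 2 ≤
        (4 * G ^ 4 * E * ‖x‖ ^ 2 * γ ^ 4 + 4 * G ^ 4 * K ^ 2 * ‖x‖ ^ 2 * γ ^ 4)
        + (8 * G ^ 2 * K * γ ^ 3) * (∑ i, ‖ξ' i ω‖ ^ 2) +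
        (8 * G ^ 2 * E * γ) * ∫ r in (0:ℝ)..γ, ‖B r ω‖ ^ 2 := by
      filter_upwards [hB.2.1, hX.2, hH] with ω hb hx hHω
      obtain ⟨p1, -, p2⟩ := path_est hG hlip hg0 hx.1 hb.2 hx.2 hγ.le hγ1
      set I := ∫ r in (0:ℝ)..γ, ‖X r ω - x‖
      set Q := ∫ r in (0:ℝ)..γ, ‖B r ω‖ ^ 2
      have e : X γ ω - oneStepPRLMC U γ K x B H ξ' ω =
          (X γ ω - x + γ • gradient U x - Real.sqrt 2 • B γ ω) -
          γ • ∑ i : Fin K, H i ω •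
            (gradient U x - gradient U (prlmcMid U γ K x (fun j => ξ' j ω) i)) := by
        unfold oneStepPRLMC; abel
      set M : Fin K → ℝ := fun i => ‖prlmcMid U γ K x (fun j => ξ' j ω) i - x‖ with hM
      have hsum : ‖γ • ∑ i : Fin K, H i ω •
            (gradient U x - gradient U (prlmcMid U γ K x (fun j => ξ' j ω) i))‖ ≤
          γ * (G * ∑ i, M i) := by
        rw [norm_smul, Real.norm_of_nonneg hγ.le, Finset.mul_sum]
        gcongr
        refine norm_sum_le_of_le _ fun i _ => ?_
        rw [norm_smul, norm_sub_rev]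
        have := hlip x (prlmcMid U γ K x (fun j => ξ' j ω) i)
        calc _ ≤ 1 * (G * M i) := by gcongr; exact hHω i
          _ = _ := one_mul _
      have hMs : (∑ i, M i) ^ 2 ≤ K * ∑ i, M i ^ 2 := by
        have := sq_sum_le_card_mul_sum_sq (s := (Finset.univ : Finset (Fin K))) (f := M)
        simpa using this
      have hMi : ∑ i, M i ^ 2 ≤ K * (2 * γ ^ 2 * G ^ 2 * ‖x‖ ^ 2) + 4 * γ * ∑ i, ‖ξ' i ω‖ ^ 2 := by
        calc ∑ i, M i ^ 2 ≤ ∑ i, (2 * γ ^ 2 * G ^ 2 * ‖x‖ ^ 2 + 4 * γ * ‖ξ' i ω‖ ^ 2) :=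
              Finset.sum_le_sum fun i _ => mid_est hK hG hFx hγ.le _ i
          _ = _ := by rw [Finset.sum_add_distrib, Finset.mul_sum (f := fun i => ‖ξ' i ω‖ ^ 2)]; simp
      have hn := (norm_sub_le (X γ ω - x + γ • gradient U x - Real.sqrt 2 • B γ ω)
          (γ • ∑ i : Fin K, H i ω •
            (gradient U x - gradient U (prlmcMid U γ K x (fun j => ξ' j ω) i)))).trans
          (add_le_add p2 hsum)
      rw [← e] at hn
      calc _ ≤ (G * I + γ * (G * ∑ i, M i)) ^ 2 := pow_le_pow_left₀ (norm_nonneg _) hn 2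
        _ ≤ 2 * (G * I) ^ 2 + 2 * (γ * (G * ∑ i, M i)) ^ 2 := by
          nlinarith [sq_nonneg (G * I - γ * (G * ∑ i, M i))]
        _ = 2 * G ^ 2 * I ^ 2 + 2 * γ ^ 2 * G ^ 2 * (∑ i, M i) ^ 2 := by ring
        _ ≤ 2 * G ^ 2 * (E * (2 * G ^ 2 * ‖x‖ ^ 2 * γ ^ 4 + 4 * γ * Q)) +
            2 * γ ^ 2 * G ^ 2 * (K * (K * (2 * γ ^ 2 * G ^ 2 * ‖x‖ ^ 2) +
              4 * γ * ∑ i, ‖ξ' i ω‖ ^ 2)) := by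
          gcongr
          exact hMs.trans (by gcongr)
        _ = _ := by ring
    have hξs : ∫⁻ ω, ENNReal.ofReal (∑ i, ‖ξ' i ω‖ ^ 2) ∂P ≤ ENNReal.ofReal (K * D) := by
      have e : ∀ ω, ENNReal.ofReal (∑ i, ‖ξ' i ω‖ ^ 2) = ∑ i, ‖ξ' i ω‖ₑ ^ 2 := by
        intro ω
        rw [ENNReal.ofReal_sum_of_nonneg (fun _ _ => sq_nonneg _)]
        exact Finset.sum_congr rfl fun i _ => by rw [← enorm_sq_eq]; rfl
      simp_rw [e]
      rw [lintegral_finsetSum' _ (fun i _ => ((hξm i).enorm.pow_const 2))]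
      simp_rw [hξ, hDe]
      rw [ENNReal.ofReal_mul (by positivity)]
      simp
    refine (expect_bound (by positivity) (by positivity) (by positivity) (a := K * D)
      (b := γ ^ 2 * D)
      (by positivity) (by positivity) hbd (hQ γ hγ.le).1 hξs (hQ γ hγ.le).2).trans ?_
    apply ENNReal.ofReal_le_ofReal
    have g43 : γ ^ 4 ≤ γ ^ 3 := pow_le_pow_of_le_one hγ.le hγ1 (by norm_num)
    have a1 : 4 * G ^ 4 * E * ‖x‖ ^ 2 * γ ^ 4 ≤ 4 * G ^ 4 * E * W * γ ^ 3 := by gcongr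
    have a2 : 4 * G ^ 4 * K ^ 2 * ‖x‖ ^ 2 * γ ^ 4 ≤ 4 * G ^ 4 * K ^ 2 * W * γ ^ 3 := by gcongr
    have a3 : (8 * G ^ 2 * K * γ ^ 3) * (K * D) ≤ 8 * G ^ 2 * K ^ 2 * D * W * γ ^ 3 := by
      calc (8 * G ^ 2 * K * γ ^ 3) * (K * D) = 8 * G ^ 2 * K ^ 2 * D * 1 * γ ^ 3 := by ring
        _ ≤ _ := by gcongr
    have a4 : (8 * G ^ 2 * E * γ) * (γ ^ 2 * D) ≤ 8 * G ^ 2 * E * D * W * γ ^ 3 := by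
      calc (8 * G ^ 2 * E * γ) * (γ ^ 2 * D) = 8 * G ^ 2 * E * D * 1 * γ ^ 3 := by ring
        _ ≤ _ := by gcongr
    calc _ ≤ 4 * G ^ 4 * E * W * γ ^ 3 + 4 * G ^ 4 * K ^ 2 * W * γ ^ 3 +
          8 * G ^ 2 * K ^ 2 * D * W * γ ^ 3 + 8 * G ^ 2 * E * D * W * γ ^ 3 := by linarith
      _ = _ := by rw [hC3]; ring
  have hW0 : 0 ≤ W := by linarith
  simp only [enorm_sq_eq]
  refine ⟨(part1 t ht.1 (ht.2.trans hγ1)).trans ?_, ?_, part3.trans ?_⟩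
  · apply ENNReal.ofReal_le_ofReal
    have := ht.1
    gcongr
    linarith
  · have hXm : AEMeasurable (fun ω => ENNReal.ofReal (‖X γ ω - x‖ ^ 2)) P := by
      have := hX.1 γ
      exact Measurable.aemeasurable (by fun_prop)
    have hbd : ∀ᵐ ω ∂P, ‖oneStepPRLMC U γ K x B H ξ' ω - x‖ ^ 2 ≤
        0 + 2 * ‖X γ ω - oneStepPRLMC U γ K x B H ξ' ω‖ ^ 2 + 2 * ‖X γ ω - x‖ ^ 2 := by
      refine Eventually.of_forall fun ω => ?_
      have e : oneStepPRLMC U γ K x B H ξ' ω - x =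
        (X γ ω - x) - (X γ ω - oneStepPRLMC U γ K x B H ξ' ω) := by abel
      have h := norm_sub_le (X γ ω - x) (X γ ω - oneStepPRLMC U γ K x B H ξ' ω)
      rw [← e] at h
      set p := ‖X γ ω - x‖
      set q := ‖X γ ω - oneStepPRLMC U γ K x B H ξ' ω‖
      calc _ ≤ (p + q) ^ 2 := by gcongr
        _ ≤ _ := by nlinarith [sq_nonneg (p - q)]
    refine (expect_bound le_rfl (by norm_num) (by norm_num) (by positivity) (by positivity)
      hbd hXm part3 (part1 γ hγ.le hγ1)).trans ?_
    apply ENNReal.ofReal_le_ofReal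
    have g3 : γ ^ 3 ≤ γ := pow_le_of_le_one hγ.le hγ1 (by norm_num)
    have : C3 * W * γ ^ 3 ≤ C3 * W * γ := by gcongr
    nlinarith [mul_nonneg hW0 hγ.le]
  · apply ENNReal.ofReal_le_ofReal
    gcongr
    linarith

end
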